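/- Let q > 2, let b, t, γ be positive integers with 2t < b, let F be a finite set and f : Σ_q^b → F a one-burst-t-deletion syndrome function. Let x = x_1 x_2 ⋯ x_γ ∈ Σ_q^{bγ} be such that every segment satisfies x_{i,b−t+1} = x_{i,b}, and for every i ∈ [2,γ] the symbols x_{i,1}, x_{i,t+1}, x_{i,2t} are all different from x_{i−1,b}. Let y be obtained from x by deleting, from each segment i, either no symbols (d_i = 0) or one burst of t consecutive symbols (d_i = t). Fix i ∈ [1,γ], set p_i = (i−1)b − Σ_{j<i} d_j, and assume p_i + b ≤ |y|. If f(y(p_i+1 : p_i+b)) = f(x_i), then d_i = 0 and y(p_i+1 : p_i+b) = x_i (so the (i+1)-th segment of x starts at position p_i + b + 1 of y). -/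

import Mathlib

/-- The one-burst-`t`-deletion ball `B_t^D(x)`: all sequences obtained from `x` by
deleting `t` consecutive symbols. -/
def burstDelBall {q : ℕ} (t : ℕ) (x : List (Fin q)) : Set (List (Fin q)) :=
  {y | ∃ i, i + t ≤ x.length ∧ y = x.take i ++ x.drop (i + t)}

/-- The `i`-th (0-indexed) segment of length `b` of `x`. -/
def seg {q : ℕ} (b : ℕ) (x : List (Fin q)) (i : ℕ) : List (Fin q) :=
  (x.drop (i * b)).take b

/-- The segmented burst-deletion ball `B^D_{γ,t}(x)`: concatenations `z_1 ⋯ z_γ`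
where each `z_i` is either the `i`-th segment of `x` or obtained from it by one
burst of `t` deletions. -/
def segBall {q : ℕ} (b t γ : ℕ) (x : List (Fin q)) : Set (List (Fin q)) :=
  {y | ∃ z : Fin γ → List (Fin q),
      (∀ i : Fin γ, z i = seg b x i ∨ z i ∈ burstDelBall t (seg b x i)) ∧
      y = (List.ofFn z).flatten}

/-- `f` is a one-burst-`t`-deletion syndrome function on length-`b` sequences. -/
def IsSyndrome {q : ℕ} (b t : ℕ) {F : Type*} (f : List (Fin q) → F) : Prop :=
  ∀ u v : List (Fin q), u.length = b → v.length = b → u ≠ v → f u = f v →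
    burstDelBall t u ∩ burstDelBall t v = ∅

/-!
The first symbol after a burst-`t`-deleted segment `z_i` sits at offset `b - t` of the window
`y(p_i+1 : p_i+b)`. Since `z_i` is a prefix of the window, it lies in the deletion balls of both
the window and `x_i`, so equal syndromes force the window to be `x_i`. Hence the first symbol of
`z_{i+1}` is `x_{i,b-t+1}`. But whatever happened to segment `i + 1`, that symbol is `x_{i+1,1}` or
`x_{i+1,t+1}`, and both differ from `x_{i,b-t+1} = x_{i,b}`.
-/

section Lists

variable {α : Type*} {n : ℕ}

theorem drop_ofFn_eq_cons (z : Fin n → α) (i : Fin n) :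
    (List.ofFn z).drop i = z i :: (List.ofFn z).drop (i + 1) := by
  rw [List.drop_eq_getElem_cons (by simp), List.getElem_ofFn]

theorem drop_flatten_ofFn (z : Fin n → List α) (i : Fin n) :
    (List.ofFn z).flatten.drop (∑ j with j < i, (z j).length) =
      z i ++ ((List.ofFn z).drop (i + 1)).flatten := by
  have hsum : ∑ j with j < i, (z j).length = (((List.ofFn z).map List.length).take i).sum := by
    rw [List.map_ofFn, List.sum_take_ofFn]
    rfl
  rw [hsum, List.drop_sum_flatten, drop_ofFn_eq_cons, List.flatten_cons]

theorem sum_length_eq_mul_sub {z : Fin n → List α} {d : Fin n → ℕ} {b : ℕ}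
    (hlen : ∀ j, (z j).length + d j = b) (i : Fin n) :
    ∑ j with j < i, (z j).length = i * b - ∑ j with j < i, d j := by
  refine Nat.eq_sub_of_add_eq ?_
  simp only [← Finset.sum_add_distrib, hlen, Finset.sum_const, Finset.filter_gt_eq_Iio,
    Fin.card_Iio, smul_eq_mul]

theorem exists_getElem?_zero_flatten_drop_ofFn {z : Fin n → List α} (hz : ∀ j, z j ≠ []) {k : ℕ}
    (hk : ((List.ofFn z).drop k).flatten ≠ []) :
    ∃ j : Fin n, j.val = k ∧ ((List.ofFn z).drop k).flatten[0]? = (z j)[0]? := by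
  obtain hlt | hle := lt_or_ge k n
  · refine ⟨⟨k, hlt⟩, rfl, ?_⟩
    rw [drop_ofFn_eq_cons z ⟨k, hlt⟩, List.flatten_cons,
      List.getElem?_append_left (List.length_pos_iff.mpr (hz _))]
  · rw [List.drop_of_length_le (by rwa [List.length_ofFn])] at hk
    exact absurd List.flatten_nil hk

end Lists

section Segments

variable {q b t : ℕ} {s z : List (Fin q)}

theorem length_seg {x : List (Fin q)} {i : ℕ} (h : (i + 1) * b ≤ x.length) :
    (seg b x i).length = b := by
  rw [Nat.succ_mul] at h
  rw [seg, List.length_take, List.length_drop]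
  omega

theorem length_add_of_mem_burstDelBall (hz : z ∈ burstDelBall t s) :
    z.length + t = s.length := by
  obtain ⟨k, hk, rfl⟩ := hz
  rw [List.length_append, List.length_take, List.length_drop]
  omega

theorem take_mem_burstDelBall (h : t ≤ s.length) :
    s.take (s.length - t) ∈ burstDelBall t s := by
  refine ⟨s.length - t, by omega, ?_⟩
  rw [Nat.sub_add_cancel h, List.drop_length, List.append_nil]

theorem getElem?_zero_of_mem_burstDelBall (hz : z ∈ burstDelBall t s) :
    z[0]? = s[0]? ∨ z[0]? = s[t]? := by
  obtain ⟨_ | k, hk, rfl⟩ := hz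
  · right
    rw [List.take_zero, List.nil_append, List.getElem?_drop, Nat.zero_add, Nat.add_zero]
  · left
    rw [List.getElem?_append_left (by rw [List.length_take]; omega),
      List.getElem?_take_of_lt k.succ_pos]

namespace IsSyndrome

variable {F : Type*} {f : List (Fin q) → F} {r : List (Fin q)}

theorem take_append_eq (hf : IsSyndrome b t f) (hs : s.length = b)
    (hz : z ∈ burstDelBall t s) (hr : b ≤ (z ++ r).length)
    (hfs : f ((z ++ r).take b) = f s) : (z ++ r).take b = s := by
  have hzlen := length_add_of_mem_burstDelBall hz
  have hwin : ((z ++ r).take b).length = b := List.length_take_of_le hr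
  have hprefix : ((z ++ r).take b).take (b - t) = z := by
    rw [List.take_take, List.take_left' (by omega)]
  have hzwin := take_mem_burstDelBall (t := t) (s := (z ++ r).take b) (by omega)
  rw [hwin, hprefix] at hzwin
  by_contra hne
  have hball := hf _ s hwin hs hne hfs
  exact Set.eq_empty_iff_forall_notMem.mp hball z ⟨hzwin, hz⟩

theorem getElem?_zero_eq (hf : IsSyndrome b t f) (ht : 0 < t) (hs : s.length = b)
    (hz : z ∈ burstDelBall t s) (hr : b ≤ (z ++ r).length)
    (hfs : f ((z ++ r).take b) = f s) : r[0]? = s[b - t]? := by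
  have hzlen := length_add_of_mem_burstDelBall hz
  rw [← hf.take_append_eq hs hz hr hfs, List.getElem?_take_of_lt (by omega),
    List.getElem?_append_right (by omega), show b - t - z.length = 0 by omega]

theorem exists_succ_getElem?_eq {n : ℕ} (hf : IsSyndrome b t f) (ht : 0 < t) (htb : t < b)
    {s z : Fin n → List (Fin q)} (hs : ∀ j, (s j).length = b)
    (hz : ∀ j, z j = s j ∨ z j ∈ burstDelBall t (s j)) {i : Fin n}
    (hzi : z i ∈ burstDelBall t (s i))
    (hwin : b ≤ (z i ++ ((List.ofFn z).drop (i + 1)).flatten).length)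
    (hfs : f ((z i ++ ((List.ofFn z).drop (i + 1)).flatten).take b) = f (s i)) :
    ∃ j : Fin n, j.val = i.val + 1 ∧
      ((s j)[0]? = (s i)[b - t]? ∨ (s j)[t]? = (s i)[b - t]?) := by
  have hz_ne (j : Fin n) : z j ≠ [] := by
    rw [← List.length_pos_iff]
    rcases hz j with h | h
    · rw [h, hs j]
      omega
    · have := length_add_of_mem_burstDelBall h
      have := hs j
      omega
  have hrest : ((List.ofFn z).drop (i + 1)).flatten ≠ [] := by
    have := length_add_of_mem_burstDelBall hzi
    have := hs i
    rw [List.length_append] at hwin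
    exact List.length_pos_iff.mp (by omega)
  obtain ⟨j, hj, hzj⟩ := exists_getElem?_zero_flatten_drop_ofFn hz_ne hrest
  have hfirst := hf.getElem?_zero_eq ht (hs i) hzi hwin hfs
  rw [hzj] at hfirst
  refine ⟨j, hj, ?_⟩
  rw [← hfirst]
  rcases hz j with h | h
  · exact .inl (h ▸ rfl)
  · exact (getElem?_zero_of_mem_burstDelBall h).imp Eq.symm Eq.symm

end IsSyndrome

theorem stmt5_general {γ : ℕ} (htb : t < b) {F : Type*} {f : List (Fin q) → F}
    (hf : IsSyndrome b t f) {x : List (Fin q)} (hx : x.length = b * γ)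
    {d : Fin γ → ℕ} (hd : ∀ j, d j = 0 ∨ d j = t) {z : Fin γ → List (Fin q)}
    (hz0 : ∀ j, d j = 0 → z j = seg b x j)
    (hzt : ∀ j, d j = t → z j ∈ burstDelBall t (seg b x j))
    {y : List (Fin q)} (hy : y = (List.ofFn z).flatten) {i : Fin γ} {p : ℕ}
    (hp : p = i.val * b - ∑ j with j < i, d j) (hpb : p + b ≤ y.length)
    (hfy : f ((y.drop p).take b) = f (seg b x i))
    (hsep : ∀ j : Fin γ, j.val = i.val + 1 →
      (seg b x j)[0]? ≠ (seg b x i)[b - t]? ∧ (seg b x j)[t]? ≠ (seg b x i)[b - t]?) :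
    d i = 0 ∧ (y.drop p).take b = seg b x i := by
  have hseg (j : Fin γ) : (seg b x j).length = b :=
    length_seg (by rw [hx, Nat.mul_comm b]; exact Nat.mul_le_mul_right b j.isLt)
  have hlen (j : Fin γ) : (z j).length + d j = b := by
    rcases hd j with h | h
    · rw [hz0 j h, h, Nat.add_zero, hseg j]
    · rw [h, length_add_of_mem_burstDelBall (hzt j h), hseg j]
  have hdrop : y.drop p = z i ++ ((List.ofFn z).drop (i + 1)).flatten := by
    rw [hy, hp, ← sum_length_eq_mul_sub hlen, drop_flatten_ofFn]
  have hwin : b ≤ (y.drop p).length := by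
    rw [List.length_drop]
    omega
  rw [hdrop] at hfy hwin ⊢
  obtain h0 | hpos := Nat.eq_zero_or_pos (d i)
  · exact ⟨h0, by rw [List.take_left' (by have := hlen i; omega), hz0 i h0]⟩
  exfalso
  have hdi : d i = t := (hd i).resolve_left hpos.ne'
  have hz (j : Fin γ) : z j = seg b x j ∨ z j ∈ burstDelBall t (seg b x j) :=
    (hd j).imp (hz0 j) (hzt j)
  obtain ⟨j, hj, hmatch⟩ :=
    hf.exists_succ_getElem?_eq (hdi ▸ hpos) htb hseg hz (hzt i hdi) hwin hfy
  exact hmatch.elim (hsep j hj).1 (hsep j hj).2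

end Segments

/-- `q`-ary (`q > 2`) decoding lemma.  If the windowed syndrome
matches the segment syndrome, then the segment suffered no deletion and is read
off exactly, so the next segment starts at position `p_i + b + 1`. -/
theorem stmt5 (q b t γ : ℕ) (hq : 2 < q) (hb : 0 < b) (ht : 0 < t) (hγ : 0 < γ)
    (h2t : 2 * t < b) (F : Type*) [Fintype F]
    (f : List (Fin q) → F) (hf : IsSyndrome b t f)
    (x : List (Fin q)) (hx : x.length = b * γ)
    (hseg1 : ∀ i : Fin γ, (seg b x i)[b - t]? = (seg b x i)[b - 1]?)
    (hseg2 : ∀ i : Fin γ, 0 < i.val →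
      (seg b x i)[0]? ≠ (seg b x (i.val - 1))[b - 1]? ∧
      (seg b x i)[t]? ≠ (seg b x (i.val - 1))[b - 1]? ∧
      (seg b x i)[2 * t - 1]? ≠ (seg b x (i.val - 1))[b - 1]?)
    (d : Fin γ → ℕ) (hd : ∀ i, d i = 0 ∨ d i = t)
    (z : Fin γ → List (Fin q))
    (hz0 : ∀ i, d i = 0 → z i = seg b x i)
    (hzt : ∀ i, d i = t → z i ∈ burstDelBall t (seg b x i))
    (y : List (Fin q)) (hy : y = (List.ofFn z).flatten)
    (i : Fin γ) (p : ℕ)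
    (hp : p = i.val * b - ∑ j ∈ Finset.univ.filter (fun j : Fin γ => j < i), d j)
    (hpb : p + b ≤ y.length)
    (hfy : f ((y.drop p).take b) = f (seg b x i)) :
    d i = 0 ∧ (y.drop p).take b = seg b x i := by
  refine stmt5_general (by omega) hf hx hd hz0 hzt hy hp hpb hfy fun j hj => ?_
  simpa only [hj, Nat.add_sub_cancel, hseg1] using (hseg2 j (by omega)).imp_right And.left
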